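/- Let K be a field, S1 = K[x_1,…,x_n] and S2 = K[y_1,…,y_m] polynomial rings in disjoint sets of variables, and let I1 ⊆ S1 and I2 ⊆ S2 be squarefree monomial ideals. If both normalized depth functions g_{I1} and g_{I2} are non-increasing on their domains, then the normalized depth function g_{I1·I2} of the product ideal I1·I2 in S = K[x_1,…,x_n,y_1,…,y_m] is non-increasing on {1,…,ν(I1·I2)}. -/

import Mathlib

open MvPolynomial

/-- The squarefree monomial `∏ i ∈ F, xᵢ`. -/
noncomputable def sqMon (K : Type) [Field K] {σ : Type} (F : Finset σ) :
    MvPolynomial σ K := ∏ i ∈ F, X i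

/-- `I` is a squarefree monomial ideal if it is generated by squarefree monomials. -/
def IsSqfreeMonomialIdeal (K : Type) [Field K] {σ : Type}
    (I : Ideal (MvPolynomial σ K)) : Prop :=
  ∃ 𝒢 : Set (Finset σ), I = Ideal.span ((sqMon K) '' 𝒢)

/-- The `k`-th squarefree power `I^[k]`: the ideal generated by all squarefree
monomials belonging to `I^k`. -/
noncomputable def sqfreePower (K : Type) [Field K] {σ : Type}
    (I : Ideal (MvPolynomial σ K)) (k : ℕ) : Ideal (MvPolynomial σ K) :=
  Ideal.span {m | ∃ F : Finset σ, m = sqMon K F ∧ m ∈ I ^ k}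

/-- The monomial grade `ν(I)`: the largest `k` with `I^[k] ≠ (0)`. -/
noncomputable def monGrade (K : Type) [Field K] {σ : Type}
    (I : Ideal (MvPolynomial σ K)) : ℕ :=
  sSup {k | sqfreePower K I k ≠ ⊥}

/-- The initial degree of a squarefree monomial ideal: the least degree of a
(squarefree) monomial belonging to it. -/
noncomputable def indeg (K : Type) [Field K] {σ : Type}
    (I : Ideal (MvPolynomial σ K)) : ℕ :=
  sInf {d | ∃ F : Finset σ, F.card = d ∧ sqMon K F ∈ I}

/-- The depth of `S/I` over the polynomial ring `S`: the longest length of a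
regular sequence on `S/I` consisting of elements of the irrelevant maximal ideal. -/
noncomputable def polyDepth (K : Type) [Field K] {σ : Type}
    (I : Ideal (MvPolynomial σ K)) : ℕ :=
  sSup {k | ∃ rs : List (MvPolynomial σ K), rs.length = k ∧
    (∀ r ∈ rs, r ∈ Ideal.span (Set.range (X : σ → MvPolynomial σ K))) ∧
    RingTheory.Sequence.IsRegular (MvPolynomial σ K ⧸ I) rs}

/-- The normalized depth function `g_I(k) = depth(S/I^[k]) - (indeg(I^[k]) - 1)`. -/
noncomputable def nDepth (K : Type) [Field K] {σ : Type}
    (I : Ideal (MvPolynomial σ K)) (k : ℕ) : ℤ :=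
  (polyDepth K (sqfreePower K I k) : ℤ) - ((indeg K (sqfreePower K I k) : ℤ) - 1)

/-- Multiplication by `x` is injective on `R ⧸ J`. -/
def RegularMod {R : Type*} [CommRing R] (J : Ideal R) (x : R) : Prop :=
  ∀ s, x * s ∈ J → s ∈ J

/-- The quotient `R ⧸ J` contains a nonzero element annihilated by `𝔪`. -/
def HasSocle {R : Type*} [CommRing R] (𝔪 J : Ideal R) : Prop :=
  ∃ s, s ∉ J ∧ ∀ z ∈ 𝔪, z * s ∈ J

/-- There is a weakly regular sequence of length `k` on `R ⧸ J` consisting of elements of `𝔪`. -/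
def DepthGE {R : Type*} [CommRing R] (𝔪 : Ideal R) : ℕ → Ideal R → Prop
  | 0, _ => True
  | k + 1, J => ∃ x ∈ 𝔪, RegularMod J x ∧ DepthGE 𝔪 k (J ⊔ Ideal.span {x})

section Depth

variable {R : Type*} [CommRing R] {𝔪 J A B : Ideal R} {x y z : R} {k l : ℕ}

theorem mem_sup_span_singleton_iff {s : R} :
    s ∈ J ⊔ Ideal.span {x} ↔ ∃ j ∈ J, ∃ c, j + x * c = s := by
  rw [Submodule.mem_sup]
  refine exists_congr fun j => and_congr_right fun _ => ?_
  simp only [Ideal.mem_span_singleton]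
  constructor
  · rintro ⟨_, ⟨c, rfl⟩, h⟩; exact ⟨c, h⟩
  · rintro ⟨c, h⟩; exact ⟨_, ⟨c, rfl⟩, h⟩

theorem HasSocle.not_regularMod (h : HasSocle 𝔪 J) (hx : x ∈ 𝔪) : ¬ RegularMod J x := by
  obtain ⟨s, hs, hz⟩ := h
  exact fun hr => hs (hr s (hz x hx))

theorem DepthGE.not_hasSocle (h : DepthGE 𝔪 (k + 1) J) : ¬ HasSocle 𝔪 J := by
  obtain ⟨x, hx, hr, -⟩ := h
  exact fun hs => hs.not_regularMod hx hr

theorem DepthGE.mono (h : DepthGE 𝔪 l J) (hkl : k ≤ l) : DepthGE 𝔪 k J := by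
  induction l generalizing k J with
  | zero => obtain rfl : k = 0 := by omega
            trivial
  | succ l ih =>
    cases k with
    | zero => trivial
    | succ k =>
      obtain ⟨x, hx, hr, h⟩ := h
      exact ⟨x, hx, hr, ih h (by omega)⟩

/-- Prime avoidance: finitely many quotients without socle have a common regular element. -/
theorem exists_regularMod_of_not_hasSocle [IsNoetherianRing R] [h𝔪 : 𝔪.IsMaximal]
    (F : Finset (Ideal R)) (hF : ∀ J ∈ F, ¬ HasSocle 𝔪 J) :
    ∃ x ∈ 𝔪, ∀ J ∈ F, RegularMod J x := by
  by_contra! hcon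
  let T : Set (Ideal R) := ⋃ J ∈ F, associatedPrimes R (R ⧸ J)
  have hT : T.Finite := F.finite_toSet.biUnion fun J _ => associatedPrimes.finite R (R ⧸ J)
  have hsub : (𝔪 : Set R) ⊆ ⋃ P ∈ T, ((id P : Ideal R) : Set R) := by
    intro x hx
    obtain ⟨J, hJ, hxJ⟩ := hcon x hx
    simp only [RegularMod, not_forall] at hxJ
    obtain ⟨s, hs, hs'⟩ := hxJ
    have hmem : x ∈ ⋃ P ∈ associatedPrimes R (R ⧸ J), (P : Set R) := by
      rw [biUnion_associatedPrimes_eq_zero_divisors]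
      refine ⟨Ideal.Quotient.mk J s, ?_, ?_⟩
      · rwa [Ne, Ideal.Quotient.eq_zero_iff_mem]
      · rw [← Ideal.Quotient.mk_eq_mk, ← Submodule.Quotient.mk_smul]
        exact (Submodule.Quotient.mk_eq_zero J).2 hs
    simp only [Set.mem_iUnion] at hmem
    obtain ⟨P, hP, hxP⟩ := hmem
    simp only [Set.mem_iUnion]
    exact ⟨P, Set.mem_biUnion hJ hP, hxP⟩
  obtain ⟨P, hP, hle⟩ := (Ideal.subset_union_prime_finite hT (f := id) ⊥ ⊥ (by
    intro P hP _ _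
    simp only [T, Set.mem_iUnion] at hP
    obtain ⟨J, _, hP⟩ := hP
    exact hP.isPrime)).1 hsub
  simp only [T, Set.mem_iUnion] at hP
  obtain ⟨J, hJ, hP⟩ := hP
  obtain rfl : 𝔪 = P := h𝔪.eq_of_le hP.isPrime.ne_top hle
  obtain ⟨-, q, hq⟩ := isAssociatedPrime_iff.1 (show IsAssociatedPrime 𝔪 (R ⧸ J) from hP)
  obtain ⟨s, rfl⟩ := Ideal.Quotient.mk_surjective q
  have key (z : R) : z ∈ 𝔪 ↔ z * s ∈ J := by
    rw [hq, Submodule.mem_colon_singleton, Submodule.mem_bot, ← Ideal.Quotient.mk_eq_mk,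
      ← Submodule.Quotient.mk_smul, Submodule.Quotient.mk_eq_zero, smul_eq_mul]
  refine hF J hJ ⟨s, fun hs => h𝔪.ne_top ?_, fun z hz => (key z).1 hz⟩
  rw [Ideal.eq_top_iff_one, key, one_mul]
  exact hs

theorem not_hasSocle_iff_depthGE_one [IsNoetherianRing R] [h𝔪 : 𝔪.IsMaximal] :
    ¬ HasSocle 𝔪 J ↔ DepthGE 𝔪 1 J := by
  refine ⟨fun h => ?_, DepthGE.not_hasSocle⟩
  obtain ⟨x, hx, hr⟩ := exists_regularMod_of_not_hasSocle (𝔪 := 𝔪) {J} (by simpa using h)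
  exact ⟨x, hx, hr J (by simp), trivial⟩

theorem HasSocle.exchange (hrx : RegularMod J x) (hy : y ∈ 𝔪)
    (hry : RegularMod J y) (h : HasSocle 𝔪 (J ⊔ Ideal.span {x})) :
    HasSocle 𝔪 (J ⊔ Ideal.span {y}) := by
  obtain ⟨s, hs, hz⟩ := h
  simp only [mem_sup_span_singleton_iff] at hz
  obtain ⟨j, hj, c, hc⟩ := hz y hy
  refine ⟨c, fun hcy => hs ?_, fun z hzm => ?_⟩
  · obtain ⟨j', hj', d, rfl⟩ := mem_sup_span_singleton_iff.1 hcy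
    refine mem_sup_span_singleton_iff.2 ⟨s - x * d, hry _ ?_, d, by ring⟩
    have : y * (s - x * d) = j + x * j' := by linear_combination -hc
    rw [this]
    exact J.add_mem hj (J.mul_mem_left _ hj')
  · obtain ⟨j', hj', d, hd⟩ := hz z hzm
    refine mem_sup_span_singleton_iff.2 ⟨z * c - y * d, hrx _ ?_, d, by ring⟩
    have : x * (z * c - y * d) = y * j' - z * j := by linear_combination z * hc - y * hd
    rw [this]
    exact J.sub_mem (J.mul_mem_left _ hj') (J.mul_mem_left _ hj)

theorem RegularMod.swap (hx : RegularMod J x)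
    (h : RegularMod (J ⊔ Ideal.span {x}) z) : RegularMod (J ⊔ Ideal.span {z}) x := by
  intro s hs
  obtain ⟨j, hj, c, hc⟩ := mem_sup_span_singleton_iff.1 hs
  have h1 : z * c ∈ J ⊔ Ideal.span {x} :=
    mem_sup_span_singleton_iff.2 ⟨-j, J.neg_mem hj, s, by linear_combination -hc⟩
  obtain ⟨j', hj', d, rfl⟩ := mem_sup_span_singleton_iff.1 (h _ h1)
  refine mem_sup_span_singleton_iff.2 ⟨s - z * d, hx _ ?_, d, by ring⟩
  have : x * (s - z * d) = j + z * j' := by linear_combination -hc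
  rw [this]
  exact J.add_mem hj (J.mul_mem_left _ hj')

/-- Any regular element lowers the depth by exactly one. -/
theorem DepthGE.sup_span_singleton [IsNoetherianRing R] [𝔪.IsMaximal]
    (h : DepthGE 𝔪 (k + 1) J) (hx : x ∈ 𝔪) (hrx : RegularMod J x) :
    DepthGE 𝔪 k (J ⊔ Ideal.span {x}) := by
  induction k generalizing J x with
  | zero => trivial
  | succ k ih =>
    have hJ := h.not_hasSocle
    obtain ⟨y, hy, hry, hk⟩ := h
    have hJy := hk.not_hasSocle
    have hJx : ¬ HasSocle 𝔪 (J ⊔ Ideal.span {x}) := fun hs => hJy (hs.exchange hrx hy hry)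
    classical
    obtain ⟨z, hz, hrz⟩ := exists_regularMod_of_not_hasSocle (𝔪 := 𝔪)
      {J, J ⊔ Ideal.span {x}, J ⊔ Ideal.span {y}} (by simp [hJ, hJx, hJy])
    simp only [Finset.mem_insert, Finset.mem_singleton, forall_eq_or_imp, forall_eq] at hrz
    obtain ⟨hzJ, hzx, hzy⟩ := hrz
    have h1 := ih hk hz hzy
    rw [sup_right_comm] at h1
    have h2 : DepthGE 𝔪 (k + 1) (J ⊔ Ideal.span {z}) := ⟨y, hy, hry.swap hzy, h1⟩
    have h3 := ih h2 hx (hrx.swap hzx)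
    rw [sup_right_comm] at h3
    exact ⟨z, hz, hzx, h3⟩

theorem depthGE_succ_iff [IsNoetherianRing R] [𝔪.IsMaximal] (hx : x ∈ 𝔪)
    (hrx : RegularMod J x) : DepthGE 𝔪 (k + 1) J ↔ DepthGE 𝔪 k (J ⊔ Ideal.span {x}) :=
  ⟨fun h => h.sup_span_singleton hx hrx, fun h => ⟨x, hx, hrx, h⟩⟩

theorem inf_sup_span_singleton (h : RegularMod (A ⊔ B) x) :
    (A ⊓ B) ⊔ Ideal.span {x} = (A ⊔ Ideal.span {x}) ⊓ (B ⊔ Ideal.span {x}) := by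
  refine le_antisymm (le_inf (sup_le_sup_right inf_le_left _) (sup_le_sup_right inf_le_right _)) ?_
  rintro u ⟨hA, hB⟩
  obtain ⟨a, ha, c, rfl⟩ := mem_sup_span_singleton_iff.1 hA
  obtain ⟨b, hb, d, hd⟩ := mem_sup_span_singleton_iff.1 hB
  have hcd : x * (d - c) ∈ A ⊔ B :=
    Submodule.mem_sup.2 ⟨a, ha, -b, B.neg_mem hb, by linear_combination -hd⟩
  obtain ⟨a', ha', b', hb', hab⟩ := Submodule.mem_sup.1 (h _ hcd)
  refine mem_sup_span_singleton_iff.2 ⟨a - x * a', ⟨A.sub_mem ha (A.mul_mem_left _ ha'), ?_⟩,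
    c + a', by ring⟩
  have : a - x * a' = b + x * b' := by linear_combination -hd - x * hab
  rw [this]
  exact B.add_mem hb (B.mul_mem_left _ hb')

theorem RegularMod.inf (hA : RegularMod A x) (hB : RegularMod B x) : RegularMod (A ⊓ B) x :=
  fun s hs => ⟨hA s hs.1, hB s hs.2⟩

theorem HasSocle.inf_of_sup (hx : x ∈ 𝔪) (hA : RegularMod A x) (hB : RegularMod B x)
    (h : HasSocle 𝔪 (A ⊔ B)) : HasSocle 𝔪 ((A ⊓ B) ⊔ Ideal.span {x}) := by
  obtain ⟨s, hs, hz⟩ := h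
  obtain ⟨a, ha, b, hb, hab⟩ := Submodule.mem_sup.1 (hz x hx)
  refine ⟨b, fun hbx => hs ?_, fun z hzm => ?_⟩
  · obtain ⟨u, hu, c, hc⟩ := mem_sup_span_singleton_iff.1 hbx
    have h1 : x * (s - c) ∈ A := by
      have : x * (s - c) = a + u := by linear_combination -hab - hc
      rw [this]
      exact A.add_mem ha hu.1
    have h2 : x * c ∈ B := by
      have : x * c = b - u := by linear_combination hc
      rw [this]
      exact B.sub_mem hb hu.2
    exact Submodule.mem_sup.2 ⟨s - c, hA _ h1, c, hB _ h2, by ring⟩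
  · obtain ⟨a', ha', b', hb', hab'⟩ := Submodule.mem_sup.1 (hz z hzm)
    refine mem_sup_span_singleton_iff.2 ⟨z * b - x * b', ⟨?_, ?_⟩, b', by ring⟩
    · have : z * b - x * b' = x * a' - z * a := by linear_combination z * hab - x * hab'
      rw [this]
      exact A.sub_mem (A.mul_mem_left _ ha') (A.mul_mem_left _ ha)
    · exact B.sub_mem (B.mul_mem_left _ hb) (B.mul_mem_left _ hb')

theorem DepthGE.inf [IsNoetherianRing R] [𝔪.IsMaximal] (hA : DepthGE 𝔪 (k + 1) A)
    (hB : DepthGE 𝔪 (k + 1) B) (hAB : DepthGE 𝔪 k (A ⊔ B)) : DepthGE 𝔪 (k + 1) (A ⊓ B) := by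
  classical
  induction k generalizing A B with
  | zero =>
    obtain ⟨z, hz, hrz⟩ := exists_regularMod_of_not_hasSocle (𝔪 := 𝔪) {A, B}
      (by simp [hA.not_hasSocle, hB.not_hasSocle])
    exact ⟨z, hz, (hrz A (by simp)).inf (hrz B (by simp)), trivial⟩
  | succ k ih =>
    obtain ⟨z, hz, hrz⟩ := exists_regularMod_of_not_hasSocle (𝔪 := 𝔪) {A, B, A ⊔ B}
      (by simp [hA.not_hasSocle, hB.not_hasSocle, hAB.not_hasSocle])
    simp only [Finset.mem_insert, Finset.mem_singleton, forall_eq_or_imp, forall_eq] at hrz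
    obtain ⟨hzA, hzB, hzAB⟩ := hrz
    rw [depthGE_succ_iff hz (hzA.inf hzB), inf_sup_span_singleton hzAB]
    refine ih (hA.sup_span_singleton hz hzA) (hB.sup_span_singleton hz hzB) ?_
    rw [← sup_sup_distrib_right]
    exact hAB.sup_span_singleton hz hzAB

theorem DepthGE.sup_of_inf [IsNoetherianRing R] [𝔪.IsMaximal] (hA : DepthGE 𝔪 k A)
    (hB : DepthGE 𝔪 k B) (hAB : DepthGE 𝔪 (k + 1) (A ⊓ B)) : DepthGE 𝔪 k (A ⊔ B) := by
  classical
  induction k generalizing A B with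
  | zero => trivial
  | succ k ih =>
    have hsoc : ¬ HasSocle 𝔪 (A ⊔ B) := by
      intro hs
      obtain ⟨z, hz, hrz⟩ := exists_regularMod_of_not_hasSocle (𝔪 := 𝔪) {A, B}
        (by simp [hA.not_hasSocle, hB.not_hasSocle])
      have hzA := hrz A (by simp)
      have hzB := hrz B (by simp)
      exact (hAB.sup_span_singleton hz (hzA.inf hzB)).not_hasSocle (hs.inf_of_sup hz hzA hzB)
    obtain ⟨z, hz, hrz⟩ := exists_regularMod_of_not_hasSocle (𝔪 := 𝔪) {A, B, A ⊔ B}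
      (by simp [hA.not_hasSocle, hB.not_hasSocle, hsoc])
    simp only [Finset.mem_insert, Finset.mem_singleton, forall_eq_or_imp, forall_eq] at hrz
    obtain ⟨hzA, hzB, hzAB⟩ := hrz
    rw [depthGE_succ_iff hz hzAB, sup_sup_distrib_right]
    refine ih (hA.sup_span_singleton hz hzA) (hB.sup_span_singleton hz hzB) ?_
    rw [← inf_sup_span_singleton hzAB]
    exact hAB.sup_span_singleton hz (hzA.inf hzB)

theorem RegularMod.ringKrullDim_succ_le (h : RegularMod J x) :
    ringKrullDim (R ⧸ (J ⊔ Ideal.span {x})) + 1 ≤ ringKrullDim (R ⧸ J) := by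
  refine ringKrullDim_succ_le_of_surjective (Ideal.Quotient.factor le_sup_left)
    (Ideal.Quotient.factor_surjective le_sup_left) (r := Ideal.Quotient.mk J x) ?_ ?_
  · rw [mem_nonZeroDivisors_iff_right]
    intro q hq
    obtain ⟨s, rfl⟩ := Ideal.Quotient.mk_surjective q
    rw [mul_comm, ← map_mul, Ideal.Quotient.eq_zero_iff_mem] at hq
    exact Ideal.Quotient.eq_zero_iff_mem.2 (h s hq)
  · rw [Ideal.Quotient.factor_mk, Ideal.Quotient.eq_zero_iff_mem]
    exact Ideal.mem_sup_right (Ideal.mem_span_singleton_self x)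

theorem DepthGE.le_ringKrullDim (h : DepthGE 𝔪 k J) (hJ : J ≤ 𝔪) (h𝔪 : 𝔪 ≠ ⊤) :
    (k : WithBot ℕ∞) ≤ ringKrullDim (R ⧸ J) := by
  induction k generalizing J with
  | zero =>
    have : Nontrivial (R ⧸ J) :=
      Ideal.Quotient.nontrivial_iff.2 fun h => h𝔪 (top_le_iff.1 (h ▸ hJ))
    exact_mod_cast ringKrullDim_nonneg_of_nontrivial
  | succ k ih =>
    obtain ⟨x, hx, hr, h⟩ := h
    refine le_trans ?_ hr.ringKrullDim_succ_le
    push_cast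
    gcongr
    exact ih h (sup_le hJ (by simpa [Ideal.span_le] using hx))

theorem regularMod_iff_isSMulRegular : RegularMod J x ↔ IsSMulRegular (R ⧸ J) x := by
  rw [isSMulRegular_iff_right_eq_zero_of_smul]
  constructor
  · intro h q hq
    obtain ⟨s, rfl⟩ := Submodule.Quotient.mk_surjective J q
    rw [← Submodule.Quotient.mk_smul, Submodule.Quotient.mk_eq_zero] at hq
    exact (Submodule.Quotient.mk_eq_zero J).2 (h s hq)
  · intro h s hs
    refine (Submodule.Quotient.mk_eq_zero J).1 (h _ ?_)
    rwa [← Submodule.Quotient.mk_smul, Submodule.Quotient.mk_eq_zero]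

/-- The quotient of `R ⧸ J` by `x` is `R ⧸ (J ⊔ (x))`. -/
noncomputable def quotSMulTopQuotientEquiv (J : Ideal R) (x : R) :
    QuotSMulTop x (R ⧸ J) ≃ₗ[R] R ⧸ (J ⊔ Ideal.span {x}) :=
  Submodule.quotEquivOfEq _ (Submodule.map J.mkQ (Ideal.span {x})) (by
    rw [← Submodule.ideal_span_singleton_smul]
    conv_rhs => rw [← Ideal.mul_top (Ideal.span {x})]
    rw [← smul_eq_mul, Submodule.map_smul'', Submodule.map_top, Submodule.range_mkQ]) ≪≫ₗ
    Submodule.quotientQuotientEquivQuotientSup J (Ideal.span {x})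

open RingTheory.Sequence in
theorem exists_isWeaklyRegular_iff_depthGE {M : Type*} [AddCommGroup M] [Module R M]
    (e : M ≃ₗ[R] R ⧸ J) :
    (∃ rs : List R, rs.length = k ∧ (∀ r ∈ rs, r ∈ 𝔪) ∧ IsWeaklyRegular M rs) ↔
      DepthGE 𝔪 k J := by
  induction k generalizing M J with
  | zero =>
    refine ⟨fun _ => trivial, fun _ => ⟨[], rfl, by simp, .nil R M⟩⟩
  | succ k ih =>
    have e' (x : R) : QuotSMulTop x M ≃ₗ[R] R ⧸ (J ⊔ Ideal.span {x}) :=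
      QuotSMulTop.congr x e ≪≫ₗ quotSMulTopQuotientEquiv J x
    constructor
    · rintro ⟨_ | ⟨x, rs⟩, hl, hm, hr⟩
      · simp at hl
      rw [isWeaklyRegular_cons_iff, e.isSMulRegular_congr, ← regularMod_iff_isSMulRegular] at hr
      exact ⟨x, hm x (by simp), hr.1, (ih (e' x)).1
        ⟨rs, by simpa using hl, fun r hrs => hm r (by simp [hrs]), hr.2⟩⟩
    · rintro ⟨x, hx, hr, h⟩
      obtain ⟨rs, hl, hm, hw⟩ := (ih (e' x)).2 h
      refine ⟨x :: rs, by simp [hl], by simpa [hx] using hm, ?_⟩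
      rw [isWeaklyRegular_cons_iff, e.isSMulRegular_congr, ← regularMod_iff_isSMulRegular]
      exact ⟨hr, hw⟩

open RingTheory.Sequence in
theorem exists_isRegular_iff_depthGE (hJ : J ≤ 𝔪) (h𝔪 : 𝔪 ≠ ⊤) :
    (∃ rs : List R, rs.length = k ∧ (∀ r ∈ rs, r ∈ 𝔪) ∧ IsRegular (R ⧸ J) rs) ↔
      DepthGE 𝔪 k J := by
  rw [← exists_isWeaklyRegular_iff_depthGE (LinearEquiv.refl R (R ⧸ J))]
  refine exists_congr fun rs => and_congr_right fun _ => and_congr_right fun hm =>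
    ⟨fun h => h.toIsWeaklyRegular, fun h => ⟨h, fun htop => h𝔪 ?_⟩⟩
  have hle : Ideal.ofList rs ≤ 𝔪 := Ideal.span_le.2 hm
  rw [Ideal.eq_top_iff_one]
  have h1 : (Submodule.Quotient.mk (1 : R) : R ⧸ J) ∈ 𝔪 • (⊤ : Submodule R (R ⧸ J)) :=
    Submodule.smul_mono_left hle (htop ▸ Submodule.mem_top)
  rw [← Submodule.range_mkQ, ← Submodule.map_top, ← Submodule.map_smul'', smul_eq_mul,
    Ideal.mul_top] at h1
  obtain ⟨y, hy, hy1⟩ := h1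
  have := hJ ((Submodule.Quotient.eq J).1 hy1)
  simpa using 𝔪.sub_mem hy this

end Depth

section DisjointVariables

variable {K : Type} [Field K] {σ τ : Type}

instance idealOfVars_isMaximal : (idealOfVars σ K).IsMaximal := by
  have h : idealOfVars σ K = RingHom.ker (constantCoeff (σ := σ) (R := K)) := by
    ext p
    rw [← pow_one (idealOfVars σ K), mem_pow_idealOfVars_iff', RingHom.mem_ker,
      constantCoeff_eq]
    simp [Finsupp.degree_eq_zero_iff]
  rw [h]
  exact RingHom.ker_isMaximal_of_surjective _ fun c => ⟨C c, constantCoeff_C σ c⟩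

/-- The extension of an ideal to the polynomial ring with additional variables `τ`. -/
noncomputable abbrev extendLeft (τ : Type) (A : Ideal (MvPolynomial σ K)) :
    Ideal (MvPolynomial (σ ⊕ τ) K) := A.map (rename (Sum.inl : σ → σ ⊕ τ))

/-- The extension of an ideal to the polynomial ring with additional variables `σ`. -/
noncomputable abbrev extendRight (σ : Type) (B : Ideal (MvPolynomial τ K)) :
    Ideal (MvPolynomial (σ ⊕ τ) K) := B.map (rename (Sum.inr : τ → σ ⊕ τ))

open scoped TensorProduct

/-- The projection of `K[σ ⊕ τ]` onto `K[σ]/A ⊗ K[τ]/B`. -/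
noncomputable def toTensorQuotient (A : Ideal (MvPolynomial σ K)) (B : Ideal (MvPolynomial τ K)) :
    MvPolynomial (σ ⊕ τ) K →ₐ[K] (MvPolynomial σ K ⧸ A) ⊗[K] (MvPolynomial τ K ⧸ B) :=
  (Algebra.TensorProduct.map (Ideal.Quotient.mkₐ K A) (Ideal.Quotient.mkₐ K B)).comp
    (tensorEquivSum K σ τ K).symm.toAlgHom

theorem tensorEquivSum_tmul (f : MvPolynomial σ K) (g : MvPolynomial τ K) :
    tensorEquivSum K σ τ K (f ⊗ₜ g) = rename Sum.inl f * rename Sum.inr g := by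
  have h : (tensorEquivSum K σ τ K).toAlgHom =
      Algebra.TensorProduct.lift (rename (Sum.inl : σ → σ ⊕ τ)) (rename (Sum.inr : τ → σ ⊕ τ))
        (fun _ _ => Commute.all _ _) := by
    apply Algebra.TensorProduct.ext <;> ext i <;> simp
  simpa using DFunLike.congr_fun h (f ⊗ₜ g)

variable {A : Ideal (MvPolynomial σ K)} {B : Ideal (MvPolynomial τ K)}

theorem toTensorQuotient_mul (f : MvPolynomial σ K) (g : MvPolynomial τ K) :
    toTensorQuotient A B (rename Sum.inl f * rename Sum.inr g) =
      Ideal.Quotient.mk A f ⊗ₜ Ideal.Quotient.mk B g := by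
  rw [← tensorEquivSum_tmul]
  simp [toTensorQuotient]

theorem toTensorQuotient_eq_zero_iff {s : MvPolynomial (σ ⊕ τ) K} :
    toTensorQuotient A B s = 0 ↔ s ∈ extendLeft τ A ⊔ extendRight σ B := by
  have ker_mkₐ {ι : Type} (J : Ideal (MvPolynomial ι K)) :
      RingHom.ker (Ideal.Quotient.mkₐ K J) = J := Ideal.mk_ker
  have hker := Algebra.TensorProduct.map_ker (Ideal.Quotient.mkₐ K A) (Ideal.Quotient.mkₐ K B)
    (Ideal.Quotient.mkₐ_surjective K A) (Ideal.Quotient.mkₐ_surjective K B)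
  rw [ker_mkₐ, ker_mkₐ] at hker
  have hmap := congrArg (Ideal.map (tensorEquivSum K σ τ K).toAlgHom) hker
  rw [Ideal.map_sup, Ideal.map_mapₐ, Ideal.map_mapₐ] at hmap
  have hl : (tensorEquivSum K σ τ K).toAlgHom.comp Algebra.TensorProduct.includeLeft =
      rename (Sum.inl : σ → σ ⊕ τ) := by ext i; simp
  have hr : (tensorEquivSum K σ τ K).toAlgHom.comp Algebra.TensorProduct.includeRight =
      rename (Sum.inr : τ → σ ⊕ τ) := by ext i; simp
  rw [hl, hr] at hmap
  rw [extendLeft, extendRight, ← hmap]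
  obtain ⟨t, rfl⟩ := (tensorEquivSum K σ τ K).surjective s
  have ht : toTensorQuotient A B (tensorEquivSum K σ τ K t) = 0 ↔ t ∈ RingHom.ker
      (Algebra.TensorProduct.map (Ideal.Quotient.mkₐ K A) (Ideal.Quotient.mkₐ K B)) := by
    rw [RingHom.mem_ker, toTensorQuotient, AlgHom.comp_apply]
    exact iff_of_eq (congrArg (fun t => Algebra.TensorProduct.map (Ideal.Quotient.mkₐ K A)
      (Ideal.Quotient.mkₐ K B) t = 0) ((tensorEquivSum K σ τ K).symm_apply_apply t))
  rw [ht]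
  refine ⟨fun h => Ideal.mem_map_of_mem (tensorEquivSum K σ τ K).toAlgHom h, fun h => ?_⟩
  obtain ⟨t', ht', h'⟩ := (Ideal.mem_map_iff_of_surjective (tensorEquivSum K σ τ K).toAlgHom
    (tensorEquivSum K σ τ K).surjective).1 h
  rwa [← (tensorEquivSum K σ τ K).injective h']

theorem tmul_eq_zero_iff_of_field {V W : Type*} [AddCommGroup V] [Module K V] [AddCommGroup W]
    [Module K W] {v : V} {w : W} : v ⊗ₜ[K] w = 0 ↔ v = 0 ∨ w = 0 := by
  refine ⟨fun h => ?_, by rintro (rfl | rfl) <;> simp⟩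
  by_contra! hvw
  have hinj := Module.Flat.rTensor_preserves_injective_linearMap (M := W)
    (LinearMap.toSpanSingleton K V v)
    (LinearMap.ker_eq_bot.1 (LinearMap.ker_toSpanSingleton K hvw.1))
  have h1 : (1 : K) ⊗ₜ[K] w = 0 := hinj (by simpa using h)
  exact hvw.2 (by simpa using congrArg (TensorProduct.lid K W) h1)

theorem rename_mul_rename_mem_iff {f : MvPolynomial σ K} {g : MvPolynomial τ K} :
    rename Sum.inl f * rename Sum.inr g ∈ extendLeft τ A ⊔ extendRight σ B ↔ f ∈ A ∨ g ∈ B := by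
  rw [← toTensorQuotient_eq_zero_iff, toTensorQuotient_mul, tmul_eq_zero_iff_of_field,
    Ideal.Quotient.eq_zero_iff_mem, Ideal.Quotient.eq_zero_iff_mem]

theorem tmul_one_mul_eq_zero {U V : Type*} [CommRing U] [Algebra K U] [CommRing V] [Algebra K V]
    {u : U} (hu : ∀ t, u * t = 0 → t = 0) {q : U ⊗[K] V} (hq : (u ⊗ₜ 1) * q = 0) : q = 0 := by
  have hinj := Module.Flat.rTensor_preserves_injective_linearMap (M := V)
    (LinearMap.mulLeft K u) (by
      rw [← LinearMap.ker_eq_bot, LinearMap.ker_eq_bot']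
      exact fun t ht => hu t ht)
  refine hinj ?_
  rw [map_zero, ← hq]
  clear hq
  induction q with
  | zero => simp
  | tmul a b => simp
  | add a b ha hb => rw [map_add, ha, hb, mul_add]

theorem one_tmul_mul_eq_zero {U V : Type*} [CommRing U] [Algebra K U] [CommRing V] [Algebra K V]
    {v : V} (hv : ∀ t, v * t = 0 → t = 0) {q : U ⊗[K] V} (hq : (1 ⊗ₜ v) * q = 0) : q = 0 := by
  apply (Algebra.TensorProduct.comm K U V).injective
  rw [map_zero]
  refine tmul_one_mul_eq_zero hv ?_
  simpa using congrArg (Algebra.TensorProduct.comm K U V) hq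

theorem RegularMod.quotient_mk {R : Type*} [CommRing R] {J : Ideal R} {x : R}
    (h : RegularMod J x) (t : R ⧸ J) (ht : Ideal.Quotient.mk J x * t = 0) : t = 0 := by
  obtain ⟨t, rfl⟩ := Ideal.Quotient.mk_surjective t
  rw [← map_mul, Ideal.Quotient.eq_zero_iff_mem] at ht
  exact Ideal.Quotient.eq_zero_iff_mem.2 (h t ht)

theorem RegularMod.rename_inl {x : MvPolynomial σ K} (h : RegularMod A x) :
    RegularMod (extendLeft τ A ⊔ extendRight σ B) (rename Sum.inl x) := by
  intro s hs
  rw [← toTensorQuotient_eq_zero_iff] at hs ⊢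
  rw [map_mul, ← mul_one (rename Sum.inl x), ← map_one (rename (Sum.inr : τ → σ ⊕ τ)),
    toTensorQuotient_mul, map_one] at hs
  exact tmul_one_mul_eq_zero h.quotient_mk hs

theorem RegularMod.rename_inr {x : MvPolynomial τ K} (h : RegularMod B x) :
    RegularMod (extendLeft τ A ⊔ extendRight σ B) (rename Sum.inr x) := by
  intro s hs
  rw [← toTensorQuotient_eq_zero_iff] at hs ⊢
  rw [map_mul, ← one_mul (rename Sum.inr x), ← map_one (rename (Sum.inl : σ → σ ⊕ τ)),
    toTensorQuotient_mul, map_one] at hs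
  exact one_tmul_mul_eq_zero h.quotient_mk hs

theorem extendLeft_le (hA : A ≤ idealOfVars σ K) :
    extendLeft τ A ≤ idealOfVars (σ ⊕ τ) K := by
  refine (Ideal.map_mono hA).trans ?_
  rw [Ideal.map_span, Ideal.span_le]
  rintro _ ⟨_, ⟨i, rfl⟩, rfl⟩
  exact Ideal.subset_span ⟨Sum.inl i, (rename_X _ _).symm⟩

theorem extendRight_le (hB : B ≤ idealOfVars τ K) :
    extendRight σ B ≤ idealOfVars (σ ⊕ τ) K := by
  refine (Ideal.map_mono hB).trans ?_
  rw [Ideal.map_span, Ideal.span_le]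
  rintro _ ⟨_, ⟨i, rfl⟩, rfl⟩
  exact Ideal.subset_span ⟨Sum.inr i, (rename_X _ _).symm⟩

theorem HasSocle.extend (hA : HasSocle (idealOfVars σ K) A) (hB : HasSocle (idealOfVars τ K) B) :
    HasSocle (idealOfVars (σ ⊕ τ) K) (extendLeft τ A ⊔ extendRight σ B) := by
  obtain ⟨s, hs, hsz⟩ := hA
  obtain ⟨t, ht, htz⟩ := hB
  refine ⟨rename Sum.inl s * rename Sum.inr t, by simp [rename_mul_rename_mem_iff, hs, ht], ?_⟩
  intro z hz
  induction hz using Submodule.span_induction with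
  | zero => simp
  | add a b _ _ ha hb => rw [add_mul]; exact Ideal.add_mem _ ha hb
  | smul c a _ ha => rw [smul_eq_mul, mul_assoc]; exact Ideal.mul_mem_left _ _ ha
  | mem a ha =>
    obtain ⟨i | i, rfl⟩ := ha
    · rw [← mul_assoc, ← rename_X Sum.inl, ← map_mul, rename_mul_rename_mem_iff]
      exact Or.inl (hsz _ (Ideal.subset_span ⟨i, rfl⟩))
    · rw [mul_left_comm, ← rename_X Sum.inr, ← map_mul, rename_mul_rename_mem_iff]
      exact Or.inr (htz _ (Ideal.subset_span ⟨i, rfl⟩))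

theorem extendLeft_sup_span (x : MvPolynomial σ K) :
    extendLeft τ (A ⊔ Ideal.span {x}) ⊔ extendRight σ B =
      (extendLeft τ A ⊔ extendRight σ B) ⊔ Ideal.span {rename Sum.inl x} := by
  rw [extendLeft, Ideal.map_sup, Ideal.map_span, Set.image_singleton, sup_right_comm]

theorem extendRight_sup_span (x : MvPolynomial τ K) :
    extendLeft τ A ⊔ extendRight σ (B ⊔ Ideal.span {x}) =
      (extendLeft τ A ⊔ extendRight σ B) ⊔ Ideal.span {rename Sum.inr x} := by
  rw [extendRight, Ideal.map_sup, Ideal.map_span, Set.image_singleton, sup_assoc]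

theorem rename_inl_mem {x : MvPolynomial σ K} (hx : x ∈ idealOfVars σ K) :
    rename Sum.inl x ∈ idealOfVars (σ ⊕ τ) K :=
  extendLeft_le le_rfl (Ideal.mem_map_of_mem _ hx)

theorem rename_inr_mem {x : MvPolynomial τ K} (hx : x ∈ idealOfVars τ K) :
    rename Sum.inr x ∈ idealOfVars (σ ⊕ τ) K :=
  extendRight_le le_rfl (Ideal.mem_map_of_mem _ hx)

variable {a b : ℕ}

/-- Depth is additive for quotients by sums of ideals in disjoint sets of variables. -/
theorem DepthGE.extend (hA : DepthGE (idealOfVars σ K) a A) (hB : DepthGE (idealOfVars τ K) b B) :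
    DepthGE (idealOfVars (σ ⊕ τ) K) (a + b) (extendLeft τ A ⊔ extendRight σ B) := by
  induction a generalizing A with
  | zero =>
    rw [zero_add]
    induction b generalizing B with
    | zero => trivial
    | succ b ih =>
      obtain ⟨x, hx, hr, h⟩ := hB
      exact ⟨_, rename_inr_mem hx, hr.rename_inr, extendRight_sup_span (A := A) x ▸ ih h⟩
  | succ a ih =>
    obtain ⟨x, hx, hr, h⟩ := hA
    rw [Nat.succ_add]
    exact ⟨_, rename_inl_mem hx, hr.rename_inl, extendLeft_sup_span (B := B) x ▸ ih h⟩

/-- `R ⧸ J` has depth exactly `k`. -/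
def DepthEq {R : Type*} [CommRing R] (𝔪 : Ideal R) (k : ℕ) (J : Ideal R) : Prop :=
  DepthGE 𝔪 k J ∧ ¬ DepthGE 𝔪 (k + 1) J

theorem DepthEq.extend [Finite σ] [Finite τ] (hA : DepthEq (idealOfVars σ K) a A)
    (hB : DepthEq (idealOfVars τ K) b B) :
    DepthEq (idealOfVars (σ ⊕ τ) K) (a + b) (extendLeft τ A ⊔ extendRight σ B) := by
  refine ⟨hA.1.extend hB.1, ?_⟩
  induction a generalizing A with
  | zero =>
    rw [zero_add]
    have hsA : HasSocle (idealOfVars σ K) A :=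
      not_not.1 fun h => hA.2 (not_hasSocle_iff_depthGE_one.1 h)
    clear hA
    induction b generalizing B with
    | zero =>
      have hsB : HasSocle (idealOfVars τ K) B :=
        not_not.1 fun h => hB.2 (not_hasSocle_iff_depthGE_one.1 h)
      exact fun h => h.not_hasSocle (hsA.extend hsB)
    | succ b ih =>
      obtain ⟨⟨x, hx, hr, h⟩, hn⟩ := hB
      rw [depthGE_succ_iff hx hr] at hn
      rw [depthGE_succ_iff (rename_inr_mem hx) hr.rename_inr, ← extendRight_sup_span]
      exact ih ⟨h, hn⟩
  | succ a ih =>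
    obtain ⟨⟨x, hx, hr, h⟩, hn⟩ := hA
    rw [depthGE_succ_iff hx hr] at hn
    rw [Nat.succ_add, Nat.succ_eq_add_one, depthGE_succ_iff (rename_inl_mem hx) hr.rename_inl,
      ← extendLeft_sup_span]
    exact ih ⟨h, hn⟩

theorem ringKrullDim_mvPolynomial [Finite σ] :
    ringKrullDim (MvPolynomial σ K) = (Nat.card σ : ℕ) := by
  rw [MvPolynomial.ringKrullDim_of_isNoetherianRing, ringKrullDim_eq_zero_of_field, zero_add]

theorem DepthGE.le_card [Finite σ] (h : DepthGE (idealOfVars σ K) a A) (hA : A ≤ idealOfVars σ K) :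
    a ≤ Nat.card σ := by
  have h1 := (h.le_ringKrullDim hA idealOfVars_isMaximal.ne_top).trans (ringKrullDim_quotient_le A)
  rw [ringKrullDim_mvPolynomial] at h1
  exact_mod_cast h1

theorem DepthGE.lt_card [Finite σ] (h : DepthGE (idealOfVars σ K) a A) (hA : A ≤ idealOfVars σ K)
    (hbot : A ≠ ⊥) : a < Nat.card σ := by
  obtain ⟨x, hx, hx0⟩ := Submodule.exists_mem_ne_zero_of_ne_bot hbot
  have h1 := h.le_ringKrullDim hA idealOfVars_isMaximal.ne_top
  have h2 : ringKrullDim (MvPolynomial σ K ⧸ A) + 1 ≤ ringKrullDim (MvPolynomial σ K) :=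
    ringKrullDim_succ_le_of_surjective (Ideal.Quotient.mk A) Ideal.Quotient.mk_surjective
      (mem_nonZeroDivisors_of_ne_zero hx0) (Ideal.Quotient.eq_zero_iff_mem.2 hx)
  rw [ringKrullDim_mvPolynomial] at h2
  have h3 : ((a + 1 : ℕ) : WithBot ℕ∞) ≤ (Nat.card σ : ℕ) := by
    refine le_trans ?_ h2
    push_cast
    gcongr
  exact_mod_cast h3

theorem regularMod_span_X {s : Set σ} {i : σ} (hi : i ∉ s) :
    RegularMod (Ideal.span (X '' s : Set (MvPolynomial σ K))) (X i) := by
  intro p hp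
  rw [mem_ideal_span_X_image] at hp ⊢
  intro m hm
  obtain ⟨j, hj, hj0⟩ := hp (Finsupp.single i 1 + m) (by
    rw [mem_support_iff, coeff_X_mul]
    exact mem_support_iff.1 hm)
  refine ⟨j, hj, ?_⟩
  have : i ≠ j := by rintro rfl; exact hi hj
  simpa [Finsupp.single_apply, this] using hj0

theorem depthGE_span_X (s t : Finset σ) (h : Disjoint s t) :
    DepthGE (idealOfVars σ K) s.card (Ideal.span (X '' (t : Set σ))) := by
  classical
  induction s using Finset.induction_on generalizing t with
  | empty => trivial
  | insert i s hi ih =>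
    rw [Finset.disjoint_insert_left] at h
    rw [Finset.card_insert_of_notMem hi]
    refine ⟨X i, Ideal.subset_span ⟨i, rfl⟩, regularMod_span_X (by simpa using h.1), ?_⟩
    have := ih (insert i t) (by simp [hi, h.2])
    rwa [Finset.coe_insert, Set.image_insert_eq, Ideal.span_insert, sup_comm] at this

theorem depthEq_bot [Finite σ] : DepthEq (idealOfVars σ K) (Nat.card σ) ⊥ := by
  refine ⟨?_, fun h => absurd (h.le_card bot_le) (by omega)⟩
  have := Fintype.ofFinite σ
  simpa [Nat.card_eq_fintype_card] using
    depthGE_span_X (K := K) (Finset.univ : Finset σ) ∅ (by simp)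

theorem depthEq_polyDepth [Finite σ] (hA : A ≤ idealOfVars σ K) :
    DepthEq (idealOfVars σ K) (polyDepth K A) A := by
  have hset : {k | ∃ rs : List (MvPolynomial σ K), rs.length = k ∧
      (∀ r ∈ rs, r ∈ Ideal.span (Set.range (X : σ → MvPolynomial σ K))) ∧
      RingTheory.Sequence.IsRegular (MvPolynomial σ K ⧸ A) rs} =
      {k | DepthGE (idealOfVars σ K) k A} :=
    Set.ext fun k => exists_isRegular_iff_depthGE hA idealOfVars_isMaximal.ne_top
  have hbdd : BddAbove {k | DepthGE (idealOfVars σ K) k A} :=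
    ⟨Nat.card σ, fun k hk => DepthGE.le_card hk hA⟩
  rw [polyDepth, hset]
  have h0 : 0 ∈ {k | DepthGE (idealOfVars σ K) k A} := trivial
  refine ⟨Nat.sSup_mem ⟨0, h0⟩ hbdd, fun h => ?_⟩
  exact absurd (le_csSup hbdd (Set.mem_ofPred.2 h)) (Nat.not_succ_le_self _)

theorem DepthEq.unique (h : DepthEq (idealOfVars σ K) a A) (h' : DepthEq (idealOfVars σ K) b A) :
    a = b := by
  by_contra hab
  rcases Nat.lt_or_gt_of_ne hab with hlt | hlt
  · exact h.2 (h'.1.mono hlt)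
  · exact h'.2 (h.1.mono hlt)

theorem polyDepth_extendRight [Finite σ] [Finite τ] (hB : B ≤ idealOfVars τ K) :
    polyDepth K (extendRight σ B) = Nat.card σ + polyDepth K B := by
  have h := (depthEq_bot (K := K) (σ := σ)).extend (depthEq_polyDepth hB)
  rw [extendLeft, Ideal.map_bot, bot_sup_eq] at h
  exact (depthEq_polyDepth (extendRight_le hB)).unique h

theorem polyDepth_extendLeft [Finite σ] [Finite τ] (hA : A ≤ idealOfVars σ K) :
    polyDepth K (extendLeft τ A) = polyDepth K A + Nat.card τ := by
  have h := (depthEq_polyDepth hA).extend (depthEq_bot (K := K) (σ := τ))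
  rw [extendRight, Ideal.map_bot, sup_bot_eq] at h
  exact (depthEq_polyDepth (extendLeft_le hA)).unique h

theorem polyDepth_inf [Finite σ] [Finite τ] (hA : A ≤ idealOfVars σ K) (hA0 : A ≠ ⊥)
    (hB : B ≤ idealOfVars τ K) (hB0 : B ≠ ⊥) : polyDepth K (extendLeft τ A ⊓ extendRight σ B) =
      polyDepth K A + polyDepth K B + 1 := by
  have hdA := depthEq_polyDepth hA
  have hdB := depthEq_polyDepth hB
  have hsum := hdA.extend hdB
  have hdL := depthEq_polyDepth (extendLeft_le (τ := τ) hA)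
  have hdR := depthEq_polyDepth (extendRight_le (σ := σ) hB)
  rw [polyDepth_extendLeft hA] at hdL
  rw [polyDepth_extendRight hB] at hdR
  have hltA := hdA.1.lt_card hA hA0
  have hltB := hdB.1.lt_card hB hB0
  have hL := hdL.1.mono (show polyDepth K A + polyDepth K B + 1 ≤ _ by omega)
  have hR := hdR.1.mono (show polyDepth K A + polyDepth K B + 1 ≤ _ by omega)
  exact (depthEq_polyDepth (inf_le_left.trans (extendLeft_le hA))).unique
    ⟨hL.inf hR hsum.1, fun h => hsum.2 (hL.sup_of_inf hR h)⟩

end DisjointVariables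

section SquarefreePowers

variable {K : Type} [Field K] {σ τ : Type} {A I : Ideal (MvPolynomial σ K)}
  {B : Ideal (MvPolynomial τ K)} {k l : ℕ}

theorem sqMon_eq_monomial (F : Finset σ) :
    sqMon K F = monomial (∑ i ∈ F, Finsupp.single i 1) 1 := by
  rw [sqMon, monomial_sum_one]
  rfl

theorem sqMon_ne_zero (F : Finset σ) : sqMon K F ≠ 0 := by
  rw [sqMon_eq_monomial, Ne, monomial_eq_zero]
  exact one_ne_zero

theorem sqMon_empty : sqMon K (∅ : Finset σ) = 1 := Finset.prod_empty

theorem sqMon_disjSum (F : Finset σ) (G : Finset τ) :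
    sqMon K (F.disjSum G) = rename Sum.inl (sqMon K F) * rename Sum.inr (sqMon K G) := by
  simp [sqMon, Finset.prod_disjSum]

theorem sqMon_eq_mul (F : Finset (σ ⊕ τ)) :
    sqMon K F = rename Sum.inl (sqMon K F.toLeft) * rename Sum.inr (sqMon K F.toRight) := by
  rw [← sqMon_disjSum, Finset.toLeft_disjSum_toRight]

theorem rename_mul_rename_mem_mul_iff {f : MvPolynomial σ K} {g : MvPolynomial τ K}
    (hf : f ≠ 0) (hg : g ≠ 0) :
    rename Sum.inl f * rename Sum.inr g ∈ extendLeft τ A * extendRight σ B ↔ f ∈ A ∧ g ∈ B := by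
  constructor
  · intro h
    have h' := Ideal.mul_le_inf h
    constructor
    · have h1 := rename_mul_rename_mem_iff.1 (Ideal.mem_sup_left (T := extendRight σ ⊥) h'.1)
      simpa [hg] using h1
    · have h1 := rename_mul_rename_mem_iff.1 (Ideal.mem_sup_right (S := extendLeft τ ⊥) h'.2)
      simpa [hf] using h1
  · rintro ⟨hf, hg⟩
    exact Ideal.mul_mem_mul (Ideal.mem_map_of_mem _ hf) (Ideal.mem_map_of_mem _ hg)

theorem mul_eq_inf_of_span_monomial {G : Set (σ →₀ ℕ)} {H : Set (τ →₀ ℕ)}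
    (hA : A = Ideal.span ((fun s => monomial s 1) '' G))
    (hB : B = Ideal.span ((fun s => monomial s 1) '' H)) :
    extendLeft τ A * extendRight σ B = extendLeft τ A ⊓ extendRight σ B := by
  refine le_antisymm Ideal.mul_le_inf ?_
  rintro x ⟨hxA, hxB⟩
  have hA' : extendLeft τ A =
      Ideal.span ((fun s => monomial s 1) '' (Finsupp.mapDomain Sum.inl '' G)) := by
    rw [hA, extendLeft, Ideal.map_span, Set.image_image, Set.image_image]
    simp [rename_monomial]
  have hB' : extendRight σ B =
      Ideal.span ((fun s => monomial s 1) '' (Finsupp.mapDomain Sum.inr '' H)) := by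
    rw [hB, extendRight, Ideal.map_span, Set.image_image, Set.image_image]
    simp [rename_monomial]
  rw [hA', SetLike.mem_coe, mem_ideal_span_monomial_image] at hxA
  rw [hB', SetLike.mem_coe, mem_ideal_span_monomial_image] at hxB
  rw [x.as_sum]
  refine Ideal.sum_mem _ fun s hs => ?_
  obtain ⟨_, ⟨g, hg, rfl⟩, hgs⟩ := hxA s hs
  obtain ⟨_, ⟨h, hh, rfl⟩, hhs⟩ := hxB s hs
  have hle : Finsupp.mapDomain Sum.inl g + Finsupp.mapDomain Sum.inr h ≤ s := by
    rintro (i | i)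
    · rw [Finsupp.add_apply, Finsupp.mapDomain_of_notMem_range h, add_zero]
      · exact hgs _
      · simp
    · rw [Finsupp.add_apply, Finsupp.mapDomain_of_notMem_range g, zero_add]
      · exact hhs _
      · simp
  rw [← tsub_add_cancel_of_le hle, ← mul_one (coeff _ x), ← monomial_mul, ← mul_one (1 : K),
    ← monomial_mul]
  refine Ideal.mul_mem_left _ _ (Ideal.mul_mem_mul ?_ ?_)
  · rw [hA']
    exact Ideal.subset_span ⟨_, ⟨g, hg, rfl⟩, rfl⟩
  · rw [hB']
    exact Ideal.subset_span ⟨_, ⟨h, hh, rfl⟩, rfl⟩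

theorem sqfreePower_eq_span_monomial (I : Ideal (MvPolynomial σ K)) (k : ℕ) :
    ∃ G : Set (σ →₀ ℕ), sqfreePower K I k = Ideal.span ((fun s => monomial s 1) '' G) := by
  refine ⟨{s | ∃ F : Finset σ, s = ∑ i ∈ F, Finsupp.single i 1 ∧ sqMon K F ∈ I ^ k}, ?_⟩
  rw [sqfreePower]
  congr 1
  ext m
  constructor
  · rintro ⟨F, rfl, hF⟩
    exact ⟨_, ⟨F, rfl, hF⟩, (sqMon_eq_monomial F).symm⟩
  · rintro ⟨_, ⟨F, rfl, hF⟩, rfl⟩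
    exact ⟨F, (sqMon_eq_monomial F).symm, by simpa only [← sqMon_eq_monomial] using hF⟩

theorem sqfreePower_mul (I : Ideal (MvPolynomial σ K)) (J : Ideal (MvPolynomial τ K)) (k : ℕ) :
    sqfreePower K (extendLeft τ I * extendRight σ J) k =
      extendLeft τ (sqfreePower K I k) * extendRight σ (sqfreePower K J k) := by
  have hpow : (extendLeft τ I * extendRight σ J) ^ k =
      extendLeft τ (I ^ k) * extendRight σ (J ^ k) := by
    rw [mul_pow, extendLeft, extendRight, ← Ideal.map_pow, ← Ideal.map_pow]
  apply le_antisymm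
  · refine Ideal.span_le.2 ?_
    rintro _ ⟨F, rfl, hF⟩
    rw [hpow, sqMon_eq_mul, rename_mul_rename_mem_mul_iff (sqMon_ne_zero _) (sqMon_ne_zero _)] at hF
    rw [SetLike.mem_coe, sqMon_eq_mul]
    exact Ideal.mul_mem_mul (Ideal.mem_map_of_mem _ (Ideal.subset_span ⟨_, rfl, hF.1⟩))
      (Ideal.mem_map_of_mem _ (Ideal.subset_span ⟨_, rfl, hF.2⟩))
  · rw [extendLeft, extendRight, sqfreePower, sqfreePower, Ideal.map_span, Ideal.map_span,
      Ideal.span_mul_span', Ideal.span_le]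
    rintro _ ⟨_, ⟨_, ⟨F, rfl, hF⟩, rfl⟩, _, ⟨_, ⟨G, rfl, hG⟩, rfl⟩, rfl⟩
    refine Ideal.subset_span ⟨F.disjSum G, (sqMon_disjSum F G).symm, ?_⟩
    rw [hpow]
    exact Ideal.mul_mem_mul (Ideal.mem_map_of_mem _ hF) (Ideal.mem_map_of_mem _ hG)

theorem indeg_mul (hA : ∃ F : Finset σ, sqMon K F ∈ A) (hB : ∃ F : Finset τ, sqMon K F ∈ B) :
    indeg K (extendLeft τ A * extendRight σ B) = indeg K A + indeg K B := by
  have key (F : Finset (σ ⊕ τ)) : sqMon K F ∈ extendLeft τ A * extendRight σ B ↔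
      sqMon K F.toLeft ∈ A ∧ sqMon K F.toRight ∈ B := by
    rw [sqMon_eq_mul F, rename_mul_rename_mem_mul_iff (sqMon_ne_zero _) (sqMon_ne_zero _)]
  obtain ⟨F, hFc, hF⟩ : indeg K A ∈ {d | ∃ F : Finset σ, F.card = d ∧ sqMon K F ∈ A} :=
    Nat.sInf_mem (hA.imp' Finset.card fun F hF => ⟨F, rfl, hF⟩)
  obtain ⟨G, hGc, hG⟩ : indeg K B ∈ {d | ∃ F : Finset τ, F.card = d ∧ sqMon K F ∈ B} :=
    Nat.sInf_mem (hB.imp' Finset.card fun F hF => ⟨F, rfl, hF⟩)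
  have hFG : indeg K A + indeg K B ∈ {d | ∃ E : Finset (σ ⊕ τ), E.card = d ∧
      sqMon K E ∈ extendLeft τ A * extendRight σ B} :=
    ⟨F.disjSum G, by rw [Finset.card_disjSum, hFc, hGc], (key _).2 (by simpa using ⟨hF, hG⟩)⟩
  refine le_antisymm (Nat.sInf_le hFG) (le_csInf ⟨_, hFG⟩ ?_)
  rintro _ ⟨E, rfl, hE⟩
  rw [key] at hE
  rw [← Finset.card_toLeft_add_card_toRight]
  exact add_le_add (Nat.sInf_le ⟨_, rfl, hE.1⟩) (Nat.sInf_le ⟨_, rfl, hE.2⟩)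

theorem exists_sqMon_mem_sqfreePower (h : sqfreePower K I k ≠ ⊥) :
    ∃ F : Finset σ, sqMon K F ∈ I ^ k ∧ sqMon K F ∈ sqfreePower K I k := by
  by_contra! hcon
  refine h (Ideal.span_eq_bot.2 ?_)
  rintro _ ⟨F, rfl, hF⟩
  exact (hcon F hF (Ideal.subset_span ⟨F, rfl, hF⟩)).elim

theorem sqfreePower_antitone (I : Ideal (MvPolynomial σ K)) (hkl : k ≤ l) :
    sqfreePower K I l ≤ sqfreePower K I k := by
  refine Ideal.span_mono ?_
  rintro _ ⟨F, rfl, hF⟩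
  exact ⟨F, rfl, Ideal.pow_le_pow_right hkl hF⟩

theorem sqfreePower_le (I : Ideal (MvPolynomial σ K)) (hk : 1 ≤ k) : sqfreePower K I k ≤ I := by
  refine Ideal.span_le.2 ?_
  rintro _ ⟨F, rfl, hF⟩
  exact Ideal.pow_le_self (by omega) hF

theorem sqfreePower_top (k : ℕ) : sqfreePower K (⊤ : Ideal (MvPolynomial σ K)) k = ⊤ := by
  rw [Ideal.eq_top_iff_one]
  exact Ideal.subset_span ⟨∅, sqMon_empty.symm, by rw [Ideal.top_pow]; trivial⟩

theorem IsSqfreeMonomialIdeal.eq_top_or_le (h : IsSqfreeMonomialIdeal K I) :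
    I = ⊤ ∨ I ≤ idealOfVars σ K := by
  obtain ⟨G, rfl⟩ := h
  by_cases h0 : ∅ ∈ G
  · refine Or.inl ((Ideal.eq_top_iff_one _).2 (Ideal.subset_span ⟨∅, h0, sqMon_empty⟩))
  · refine Or.inr (Ideal.span_le.2 ?_)
    rintro _ ⟨F, hF, rfl⟩
    obtain ⟨i, hi⟩ : F.Nonempty := by
      rw [Finset.nonempty_iff_ne_empty]
      rintro rfl
      exact h0 hF
    have hX : (X i : MvPolynomial σ K) ∈ idealOfVars σ K := Ideal.subset_span ⟨i, rfl⟩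
    exact Ideal.mem_of_dvd _ (Finset.dvd_prod_of_mem _ hi) hX

theorem le_monGrade [Finite σ] (hI : I ≤ idealOfVars σ K) (h : sqfreePower K I k ≠ ⊥) :
    k ≤ monGrade K I := by
  refine le_csSup ⟨Nat.card σ, fun l hl => ?_⟩ h
  obtain ⟨F, hF, -⟩ := exists_sqMon_mem_sqfreePower hl
  have h1 := Ideal.pow_right_mono hI l hF
  rw [sqMon_eq_monomial, monomial_mem_pow_idealOfVars_iff _ _ one_ne_zero] at h1
  have := Fintype.ofFinite σ
  rw [map_sum] at h1
  simp only [Finsupp.degree_single, Finset.sum_const, smul_eq_mul, mul_one] at h1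
  rw [Nat.card_eq_fintype_card]
  exact h1.trans (Finset.card_le_univ F)

theorem sqfreePower_ne_bot_of_le_monGrade (hk : 1 ≤ k) (h : k ≤ monGrade K I) :
    sqfreePower K I k ≠ ⊥ := by
  have hpos : sSup {k | sqfreePower K I k ≠ ⊥} ≠ 0 := by
    change monGrade K I ≠ 0
    omega
  have hne : {k | sqfreePower K I k ≠ ⊥}.Nonempty := by
    by_contra hne
    rw [Set.not_nonempty_iff_eq_empty] at hne
    exact hpos (by rw [hne, csSup_empty]; rfl)
  have hbdd : BddAbove {k | sqfreePower K I k ≠ ⊥} := by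
    by_contra hb
    exact hpos (Nat.sSup_of_not_bddAbove hb)
  have hmem : sqfreePower K I (monGrade K I) ≠ ⊥ := Nat.sSup_mem hne hbdd
  exact fun h0 => hmem (le_bot_iff.1 (h0 ▸ sqfreePower_antitone I h))

theorem indeg_top : indeg K (⊤ : Ideal (MvPolynomial σ K)) = 0 :=
  Nat.eq_zero_of_le_zero (Nat.sInf_le ⟨∅, rfl, Submodule.mem_top⟩)

variable [Finite σ] [Finite τ] {J : Ideal (MvPolynomial τ K)}

theorem nDepth_mul (hI : I ≤ idealOfVars σ K) (hJ : J ≤ idealOfVars τ K) (hk : 1 ≤ k)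
    (hIk : sqfreePower K I k ≠ ⊥) (hJk : sqfreePower K J k ≠ ⊥) :
    nDepth K (extendLeft τ I * extendRight σ J) k = nDepth K I k + nDepth K J k := by
  obtain ⟨F, -, hF⟩ := exists_sqMon_mem_sqfreePower hIk
  obtain ⟨G, -, hG⟩ := exists_sqMon_mem_sqfreePower hJk
  obtain ⟨_, hI'⟩ := sqfreePower_eq_span_monomial I k
  obtain ⟨_, hJ'⟩ := sqfreePower_eq_span_monomial J k
  rw [nDepth, sqfreePower_mul, indeg_mul ⟨F, hF⟩ ⟨G, hG⟩, mul_eq_inf_of_span_monomial hI' hJ',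
    polyDepth_inf ((sqfreePower_le I hk).trans hI) hIk ((sqfreePower_le J hk).trans hJ) hJk,
    nDepth, nDepth]
  push_cast
  ring

theorem nDepth_top_mul (hJ : J ≤ idealOfVars τ K) (hk : 1 ≤ k) (hJk : sqfreePower K J k ≠ ⊥) :
    nDepth K (extendLeft τ (⊤ : Ideal (MvPolynomial σ K)) * extendRight σ J) k =
      Nat.card σ + nDepth K J k := by
  obtain ⟨G, -, hG⟩ := exists_sqMon_mem_sqfreePower hJk
  rw [nDepth, sqfreePower_mul, sqfreePower_top, indeg_mul ⟨∅, Submodule.mem_top⟩ ⟨G, hG⟩, indeg_top,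
    extendLeft, Ideal.map_top, Ideal.top_mul,
    polyDepth_extendRight ((sqfreePower_le J hk).trans hJ), nDepth]
  push_cast
  ring

theorem nDepth_mul_top (hI : I ≤ idealOfVars σ K) (hk : 1 ≤ k) (hIk : sqfreePower K I k ≠ ⊥) :
    nDepth K (extendLeft τ I * extendRight σ (⊤ : Ideal (MvPolynomial τ K))) k =
      nDepth K I k + Nat.card τ := by
  obtain ⟨F, -, hF⟩ := exists_sqMon_mem_sqfreePower hIk
  rw [nDepth, sqfreePower_mul, sqfreePower_top, indeg_mul ⟨F, hF⟩ ⟨∅, Submodule.mem_top⟩, indeg_top,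
    extendRight, Ideal.map_top, Ideal.mul_top,
    polyDepth_extendLeft ((sqfreePower_le I hk).trans hI), nDepth]
  push_cast
  ring

end SquarefreePowers

/-- **Corollary 2.2.** If the normalized depth functions of squarefree monomial ideals
`I₁ ⊆ K[x₁,…,xₙ]` and `I₂ ⊆ K[y₁,…,y_m]` (disjoint variables) are both non-increasing,
then the normalized depth function of the product `I₁·I₂ ⊆ K[x₁,…,xₙ,y₁,…,y_m]`
is non-increasing on `{1,…,ν(I₁I₂)}`. -/
theorem normalized_depth_of_product_nonincreasing (K : Type) [Field K] (n m : ℕ)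
    (I₁ : Ideal (MvPolynomial (Fin n) K)) (I₂ : Ideal (MvPolynomial (Fin m) K))
    (h₁ : IsSqfreeMonomialIdeal K I₁) (h₂ : IsSqfreeMonomialIdeal K I₂)
    (hg₁ : ∀ k : ℕ, 1 ≤ k → k + 1 ≤ monGrade K I₁ → nDepth K I₁ (k + 1) ≤ nDepth K I₁ k)
    (hg₂ : ∀ k : ℕ, 1 ≤ k → k + 1 ≤ monGrade K I₂ → nDepth K I₂ (k + 1) ≤ nDepth K I₂ k)
    (P : Ideal (MvPolynomial (Fin n ⊕ Fin m) K))
    (hP : P = Ideal.map (MvPolynomial.rename (Sum.inl : Fin n → Fin n ⊕ Fin m)) I₁ *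
              Ideal.map (MvPolynomial.rename (Sum.inr : Fin m → Fin n ⊕ Fin m)) I₂) :
    ∀ k : ℕ, 1 ≤ k → k + 1 ≤ monGrade K P → nDepth K P (k + 1) ≤ nDepth K P k := by
  intro k hk hkP
  obtain rfl : P = extendLeft (Fin m) I₁ * extendRight (Fin n) I₂ := hP
  have hPk := sqfreePower_ne_bot_of_le_monGrade (by omega) hkP
  have hne₁ : sqfreePower K I₁ (k + 1) ≠ ⊥ := by
    intro h
    rw [sqfreePower_mul, h, extendLeft, Ideal.map_bot, Ideal.bot_mul] at hPk
    exact hPk rfl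
  have hne₂ : sqfreePower K I₂ (k + 1) ≠ ⊥ := by
    intro h
    rw [sqfreePower_mul, h, extendRight, Ideal.map_bot, Ideal.mul_bot] at hPk
    exact hPk rfl
  have hne₁' := ne_bot_of_le_ne_bot hne₁ (sqfreePower_antitone I₁ k.le_succ)
  have hne₂' := ne_bot_of_le_ne_bot hne₂ (sqfreePower_antitone I₂ k.le_succ)
  have hk1 : 1 ≤ k + 1 := by omega
  rcases h₁.eq_top_or_le with rfl | hI₁ <;> rcases h₂.eq_top_or_le with rfl | hI₂
  · have huniv : {j | sqfreePower K (extendLeft (Fin m) (⊤ : Ideal (MvPolynomial (Fin n) K)) *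
        extendRight (Fin n) (⊤ : Ideal (MvPolynomial (Fin m) K))) j ≠ ⊥} = Set.univ := by
      ext j
      simp [extendLeft, extendRight, Ideal.map_top, sqfreePower_top]
    rw [monGrade, huniv, Nat.sSup_of_not_bddAbove not_bddAbove_univ] at hkP
    omega
  · rw [nDepth_top_mul hI₂ hk1 hne₂, nDepth_top_mul hI₂ hk hne₂']
    exact add_le_add_right (hg₂ k hk (le_monGrade hI₂ hne₂)) _
  · rw [nDepth_mul_top hI₁ hk1 hne₁, nDepth_mul_top hI₁ hk hne₁']
    exact add_le_add_left (hg₁ k hk (le_monGrade hI₁ hne₁)) _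
  · rw [nDepth_mul hI₁ hI₂ hk1 hne₁ hne₂, nDepth_mul hI₁ hI₂ hk hne₁' hne₂']
    exact add_le_add (hg₁ k hk (le_monGrade hI₁ hne₁)) (hg₂ k hk (le_monGrade hI₂ hne₂))
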